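/- For every e ∈ ℝ⁴ with ‖e‖ = 1, the function (x₁, x₂) ↦ 1/(‖x₁‖²‖x₁ − x₂‖²‖x₂‖²‖x₁ − e‖²‖x₂ − e‖²) is Lebesgue integrable on ℝ⁴ × ℝ⁴ and (1/π⁴) ∫_{ℝ⁴×ℝ⁴} dx₁ dx₂ / (‖x₁‖²‖x₁ − x₂‖²‖x₂‖²‖x₁ − e‖²‖x₂ − e‖²) = 6ζ(3). -/

import Mathlib

open MeasureTheory

/-!
Feynman parameters `r`, `s` merge the propagators `1 / ‖x‖²`, `1 / ‖y‖²` and `1 / ‖x - e‖²`,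
`1 / ‖y - e‖²`, and Schwinger parameters turn the integrand into Gaussians in `(x, y) ∈ V²`, whose
integrals are given by the Symanzik polynomials of `K₄`. With `Λ(p, q) = (log p - log q) / (p - q)`,
the Schwinger parameters integrate to `π⁴ ‖e‖⁻² Λ(r, s) Λ(1 - r, 1 - s)`. Since `Λ` is homogeneous
of degree `-1`, the substitutions `s = x r` and `r = (1 - y) / (1 - x y)` transform
`∫∫ Λ(r, s) Λ(1 - r, 1 - s)` over the unit square into
`2 ∫∫ Λ(x, 1) Λ(y, 1) / (1 - x y) = 2 ∑ₙ (∑_{m > n} m⁻²)²`.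
Expanding the square gives `2 (ζ(3) + 2 ζ(2, 1))`, and Euler's `ζ(2, 1) = ζ(3)` is the reflection
`x ↦ 1 - x` in `∫ log² x / (1 - x)`.
-/

section FeynmanPeriod

open Set
open scoped ENNReal

/-! ### Substitutions and null sets -/

theorem setLIntegral_image_mul_left {c : ℝ} (hc : c ≠ 0) {s : Set ℝ} (hs : MeasurableSet s)
    (g : ℝ → ℝ≥0∞) :
    ∫⁻ x in (c * ·) '' s, g x = ENNReal.ofReal |c| * ∫⁻ x in s, g (c * x) := by
  rw [lintegral_image_eq_lintegral_abs_deriv_mul hs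
    (fun x _ => (hasDerivAt_const_mul c).hasDerivWithinAt) (mul_right_injective₀ hc).injOn]
  exact lintegral_const_mul' _ _ ENNReal.ofReal_ne_top

theorem setLIntegral_Ioi_comp_mul_left {c : ℝ} (hc : 0 < c) (g : ℝ → ℝ≥0∞) :
    ∫⁻ x in Ioi 0, g x = ENNReal.ofReal c * ∫⁻ x in Ioi 0, g (c * x) := by
  simpa [abs_of_pos hc, image_mul_left_Ioi hc] using
    setLIntegral_image_mul_left hc.ne' (measurableSet_Ioi (a := (0 : ℝ))) g

theorem setLIntegral_Ioo_comp_mul_left {c : ℝ} (hc : 0 < c) (g : ℝ → ℝ≥0∞) :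
    ∫⁻ x in Ioo 0 c, g x = ENNReal.ofReal c * ∫⁻ x in Ioo 0 1, g (c * x) := by
  simpa [abs_of_pos hc, image_mul_left_Ioo hc] using
    setLIntegral_image_mul_left hc.ne' (measurableSet_Ioo (a := (0 : ℝ)) (b := 1)) g

theorem setLIntegral_Ioo_comp_sub_left (a b c : ℝ) (g : ℝ → ℝ≥0∞) :
    ∫⁻ x in Ioo a b, g (c - x) = ∫⁻ x in Ioo (c - b) (c - a), g x := by
  simpa using (Measure.measurePreserving_sub_left volume c).setLIntegral_comp_preimage_emb
    (Homeomorph.subLeft c).measurableEmbedding g (Ioo (c - b) (c - a))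

theorem lintegral_Ioo_lintegral_Ioo_of_reflect {f : ℝ → ℝ → ℝ≥0∞}
    (hf : Measurable fun z : ℝ × ℝ => f z.1 z.2) (h_reflect : ∀ r s, f (1 - r) (1 - s) = f r s) :
    ∫⁻ r in Ioo 0 1, ∫⁻ s in Ioo 0 1, f r s =
      2 * ∫⁻ r in Ioo 0 1, ∫⁻ x in Ioo 0 1, ENNReal.ofReal r * f r (x * r) := by
  let H : ℝ → ℝ≥0∞ := fun r => ∫⁻ x in Ioo 0 1, ENNReal.ofReal r * f r (x * r)
  have hH : Measurable H := Measurable.lintegral_prod_right' (f := fun z : ℝ × ℝ =>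
    ENNReal.ofReal z.1 * f z.1 (z.2 * z.1)) (by fun_prop)
  have h_below : ∀ {r : ℝ}, 0 < r → ∫⁻ s in Ioo 0 r, f r s = H r := fun {r} hr => by
    simp only [H, setLIntegral_Ioo_comp_mul_left hr, mul_comm _ r,
      lintegral_const_mul' _ _ ENNReal.ofReal_ne_top]
  have h_above : ∀ {r : ℝ}, r < 1 → ∫⁻ s in Ioo r 1, f r s = H (1 - r) := fun {r} hr => by
    rw [← h_below (sub_pos.2 hr)]
    simpa [h_reflect] using (setLIntegral_Ioo_comp_sub_left r 1 1 fun s => f (1 - r) s)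
  have h_split : ∀ r ∈ Ioo (0 : ℝ) 1, ∫⁻ s in Ioo 0 1, f r s = H r + H (1 - r) := by
    intro r hr
    rw [← h_below hr.1, ← h_above hr.2, ← Ioo_union_Ico_eq_Ioo hr.1 hr.2.le,
      lintegral_union measurableSet_Ico
        (disjoint_left.2 fun s hs hs' => hs.2.not_ge hs'.1),
      ← setLIntegral_congr (Ioo_ae_eq_Ico (a := r))]
  rw [setLIntegral_congr_fun measurableSet_Ioo h_split, lintegral_add_left hH,
    setLIntegral_Ioo_comp_sub_left, two_mul, sub_self, sub_zero]

theorem lintegral_lintegral_lintegral_rotate {α β γ : Type*} [MeasurableSpace α]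
    [MeasurableSpace β] [MeasurableSpace γ] {μ : Measure α} {ν : Measure β} {ρ : Measure γ}
    [SFinite μ] [SFinite ν] [SFinite ρ] {f : α → β → γ → ℝ≥0∞}
    (hf : Measurable fun z : α × β × γ => f z.1 z.2.1 z.2.2) :
    ∫⁻ x, ∫⁻ y, ∫⁻ z, f x y z ∂ρ ∂ν ∂μ = ∫⁻ y, ∫⁻ z, ∫⁻ x, f x y z ∂μ ∂ρ ∂ν := by
  rw [lintegral_lintegral_swap]
  · refine lintegral_congr fun y => lintegral_lintegral_swap (Measurable.aemeasurable ?_)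
    exact hf.comp (by fun_prop : Measurable fun w : α × γ => (w.1, y, w.2))
  · refine (Measurable.lintegral_prod_right' (f := fun w : (α × β) × γ => f w.1.1 w.1.2 w.2)
      ?_).aemeasurable
    exact hf.comp (by fun_prop : Measurable fun w : (α × β) × γ => (w.1.1, w.1.2, w.2))

theorem ae_prod_fst_ne_snd {α : Type*} [MeasurableSpace α] [MeasurableEq α] (μ ν : Measure α)
    [SFinite ν] [NullSingletonClass ν] : ∀ᵐ z ∂μ.prod ν, z.1 ≠ z.2 :=
  (Measure.ae_prod_iff_ae_ae (p := fun z => z.1 ≠ z.2) measurableSet_diagonal.compl).2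
    (.of_forall fun x => (Measure.ae_ne ν x).mono fun _ => Ne.symm)

theorem ae_prod_fst_ne_and_snd_ne {α : Type*} [MeasurableSpace α] (μ ν : Measure α)
    [SFinite ν] [NullSingletonClass μ] [NullSingletonClass ν] (a : α) :
    ∀ᵐ z ∂μ.prod ν, z.1 ≠ a ∧ z.2 ≠ a :=
  (Measure.quasiMeasurePreserving_fst.ae (Measure.ae_ne μ a)).and
    (Measure.quasiMeasurePreserving_snd.ae (Measure.ae_ne ν a))

/-! ### Gamma integrals, Feynman and Schwinger parameters -/

theorem lintegral_pow_mul_exp_neg_mul (k : ℕ) {r : ℝ} (hr : 0 < r) :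
    ∫⁻ t in Ioi 0, ENNReal.ofReal (t ^ k * Real.exp (-(r * t))) =
      ENNReal.ofReal (k.factorial / r ^ (k + 1)) := by
  have h_integral : ∫ t in Ioi 0, t ^ k * Real.exp (-(r * t)) = k.factorial / r ^ (k + 1) := by
    have h := Real.integral_rpow_mul_exp_neg_mul_Ioi (a := k + 1) (by positivity) hr
    rw [Real.Gamma_nat_eq_factorial, ← Nat.cast_succ, Real.rpow_natCast] at h
    simp only [Nat.cast_succ, add_sub_cancel_right, Real.rpow_natCast] at h
    rw [h, one_div, inv_pow, inv_mul_eq_div]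
  rw [← h_integral, ofReal_integral_eq_lintegral_ofReal]
  · exact .of_integral_ne_zero (h_integral ▸ by positivity)
  · filter_upwards [ae_restrict_mem measurableSet_Ioi] with t (ht : 0 < t)
    positivity

theorem lintegral_pow_mul_neg_log_pow (n k : ℕ) :
    ∫⁻ x in Ioo 0 1, ENNReal.ofReal (x ^ n * (-Real.log x) ^ k) =
      ENNReal.ofReal (k.factorial / ((n : ℝ) + 1) ^ (k + 1)) := by
  have h_deriv : ∀ t ∈ Ioi (0 : ℝ),
      HasDerivWithinAt (fun t => Real.exp (-t)) (-Real.exp (-t)) (Ioi 0) t := fun t _ => by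
    simpa using (hasDerivAt_neg t).exp.hasDerivWithinAt
  have h_image : (fun t => Real.exp (-t)) '' Ioi (0 : ℝ) = Ioo 0 1 := by
    ext x
    constructor
    · rintro ⟨t, ht, rfl⟩
      exact ⟨Real.exp_pos _, Real.exp_lt_one_iff.2 (neg_neg_of_pos ht)⟩
    · rintro ⟨hx₀, hx₁⟩
      exact ⟨-Real.log x, neg_pos.2 (Real.log_neg hx₀ hx₁), by simp [Real.exp_log hx₀]⟩
  rw [← h_image, lintegral_image_eq_lintegral_abs_deriv_mul measurableSet_Ioi h_deriv
    (Real.exp_injective.comp neg_injective).injOn,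
    ← lintegral_pow_mul_exp_neg_mul k (by positivity)]
  refine lintegral_congr fun t => ?_
  rw [← ENNReal.ofReal_mul (abs_nonneg _), abs_neg, Real.abs_exp, Real.log_exp, neg_neg,
    ← Real.exp_nat_mul, ← mul_assoc, ← Real.exp_add, mul_comm]
  ring_nf

theorem lintegral_one_div_convexCombination_sq {A B : ℝ} (hA : 0 < A) (hB : 0 < B) :
    ∫⁻ r in Ioo 0 1, ENNReal.ofReal (1 / (r * A + (1 - r) * B) ^ 2) =
      ENNReal.ofReal (1 / (A * B)) := by
  have h_pos : ∀ r ∈ Icc (0 : ℝ) 1, 0 < r * A + (1 - r) * B := fun r hr => by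
    rcases hr.1.eq_or_lt with rfl | h
    · simpa using hB
    · have := mul_pos h hA
      have := mul_nonneg (sub_nonneg.2 hr.2) hB.le
      linarith
  have h_deriv : ∀ r ∈ uIcc (0 : ℝ) 1,
      HasDerivAt (fun r => r / (B * (r * A + (1 - r) * B))) (1 / (r * A + (1 - r) * B) ^ 2) r := by
    intro r hr
    rw [uIcc_of_le zero_le_one] at hr
    have := (h_pos r hr).ne'
    have h_den : HasDerivAt (fun r => B * (r * A + (1 - r) * B)) (B * (A - B)) r :=
      (((hasDerivAt_mul_const A).add
        (((hasDerivAt_id r).const_sub 1).mul_const B)).const_mul B).congr_deriv (by ring)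
    refine ((hasDerivAt_id' r).div h_den (by positivity)).congr_deriv ?_
    field_simp
    ring
  have h_cont : ContinuousOn (fun r => 1 / (r * A + (1 - r) * B) ^ 2) (Icc 0 1) :=
    continuousOn_const.div (by fun_prop) fun r hr => (pow_pos (h_pos r hr) 2).ne'
  have h_integral := intervalIntegral.integral_eq_sub_of_hasDerivAt h_deriv
    (h_cont.intervalIntegrable_of_Icc zero_le_one)
  rw [intervalIntegral.integral_of_le zero_le_one, integral_Ioc_eq_integral_Ioo] at h_integral
  rw [← ofReal_integral_eq_lintegral_ofReal, h_integral]
  · congr 1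
    field_simp
    ring
  · exact h_cont.integrableOn_Icc.mono_set Ioo_subset_Icc_self
  · exact .of_forall fun r => by positivity

theorem lintegral_lintegral_one_div_convexCombination_sq {A B C D : ℝ} (hA : 0 < A) (hB : 0 < B)
    (hC : 0 < C) (hD : 0 < D) (K : ℝ) :
    ∫⁻ r in Ioo 0 1, ∫⁻ s in Ioo 0 1,
        ENNReal.ofReal (1 / ((r * A + (1 - r) * B) ^ 2 * (s * C + (1 - s) * D) ^ 2 * K)) =
      ENNReal.ofReal (1 / (A * B * (C * D) * K)) := by
  have h_split : ∀ a b : ℝ, ENNReal.ofReal (1 / (a ^ 2 * b ^ 2 * K)) =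
      ENNReal.ofReal (1 / a ^ 2) * ENNReal.ofReal (1 / b ^ 2) * ENNReal.ofReal (1 / K) := by
    intro a b
    rw [← ENNReal.ofReal_mul (by positivity), ← ENNReal.ofReal_mul (by positivity),
      one_div_mul_one_div, one_div_mul_one_div]
  simp only [h_split, lintegral_mul_const' _ _ ENNReal.ofReal_ne_top,
    lintegral_const_mul' _ _ ENNReal.ofReal_ne_top, lintegral_one_div_convexCombination_sq hA hB,
    lintegral_one_div_convexCombination_sq hC hD]
  rw [← ENNReal.ofReal_mul (by positivity), ← ENNReal.ofReal_mul (by positivity),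
    one_div_mul_one_div, one_div_mul_one_div]

theorem lintegral_schwinger {S T C : ℝ} (hS : 0 < S) (hT : 0 < T) (hC : 0 < C) :
    ∫⁻ m in Ioi 0, ∫⁻ l in Ioi 0, ∫⁻ t in Ioi 0,
        ENNReal.ofReal (m * (t ^ 4 * Real.exp (-(t * (S + m * T + l * C))))) =
      ENNReal.ofReal (1 / (S ^ 2 * T ^ 2 * C)) := by
  have h_split : ∀ t ∈ Ioi (0 : ℝ), ∀ m ∈ Ioi (0 : ℝ), ∀ l,
      ENNReal.ofReal (m * (t ^ 4 * Real.exp (-(t * (S + m * T + l * C))))) =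
        ENNReal.ofReal (t ^ 4 * Real.exp (-(S * t))) *
          (ENNReal.ofReal (m ^ 1 * Real.exp (-(t * T * m))) *
            ENNReal.ofReal (l ^ 0 * Real.exp (-(t * C * l)))) := by
    intro t (ht : 0 < t) m (hm : 0 < m) l
    rw [← ENNReal.ofReal_mul (by positivity), ← ENNReal.ofReal_mul (by positivity),
      show -(t * (S + m * T + l * C)) = -(S * t) + -(t * T * m) + -(t * C * l) by ring,
      Real.exp_add, Real.exp_add]
    ring_nf
  have h_inner : ∀ t ∈ Ioi (0 : ℝ), ∫⁻ m in Ioi 0, ∫⁻ l in Ioi 0,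
      ENNReal.ofReal (m * (t ^ 4 * Real.exp (-(t * (S + m * T + l * C))))) =
        ENNReal.ofReal (1 / (T ^ 2 * C)) * ENNReal.ofReal (t ^ 1 * Real.exp (-(S * t))) := by
    intro t (ht : 0 < t)
    rw [setLIntegral_congr_fun measurableSet_Ioi fun m hm => lintegral_congr (h_split t ht m hm)]
    simp_rw [lintegral_const_mul' _ _ ENNReal.ofReal_ne_top]
    rw [lintegral_pow_mul_exp_neg_mul 0 (by positivity),
      lintegral_mul_const' _ _ ENNReal.ofReal_ne_top,
      lintegral_pow_mul_exp_neg_mul 1 (by positivity), ← ENNReal.ofReal_mul (by positivity),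
      ← ENNReal.ofReal_mul (by positivity), ← ENNReal.ofReal_mul (by positivity)]
    congr 1
    norm_num
    field_simp
  rw [← lintegral_lintegral_lintegral_rotate (by fun_prop),
    setLIntegral_congr_fun measurableSet_Ioi h_inner,
    lintegral_const_mul' _ _ ENNReal.ofReal_ne_top, lintegral_pow_mul_exp_neg_mul 1 hS,
    ← ENNReal.ofReal_mul (by positivity)]
  congr 1
  norm_num
  field_simp

/-! ### The reciprocal logarithmic mean -/

/-- The reciprocal `(log p - log q) / (p - q)` of the logarithmic mean of `p` and `q`, encoded by
an integral that also makes sense for `p = q`. -/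
noncomputable def invLogMean (p q : ℝ) : ℝ≥0∞ :=
  ∫⁻ t in Ioi 0, ENNReal.ofReal (1 / ((p + t) * (q + t)))

@[fun_prop]
theorem measurable_invLogMean {α : Type*} [MeasurableSpace α] {f g : α → ℝ} (hf : Measurable f)
    (hg : Measurable g) : Measurable fun x => invLogMean (f x) (g x) := by
  unfold invLogMean
  exact Measurable.lintegral_prod_right' (f := fun z : α × ℝ =>
    ENNReal.ofReal (1 / ((f z.1 + z.2) * (g z.1 + z.2)))) (by fun_prop)

theorem invLogMean_comm (p q : ℝ) : invLogMean p q = invLogMean q p := by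
  simp only [invLogMean, mul_comm]

theorem invLogMean_eq_log_sub_log_div {p q : ℝ} (hp : 0 < p) (hq : 0 < q) (hpq : p ≠ q) :
    invLogMean p q = ENNReal.ofReal ((Real.log q - Real.log p) / (q - p)) := by
  have h_deriv : ∀ t ∈ Ici (0 : ℝ), HasDerivAt
      (fun t => (Real.log (t + p) - Real.log (t + q)) / (q - p)) (1 / ((p + t) * (q + t))) t := by
    intro t (ht : 0 ≤ t)
    have hp' : t + p ≠ 0 := by positivity
    have hq' : t + q ≠ 0 := by positivity
    have hpq' := sub_ne_zero.2 hpq.symm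
    refine (((((hasDerivAt_id' t).add_const p).log hp').sub
      (((hasDerivAt_id' t).add_const q).log hq')).div_const (q - p)).congr_deriv ?_
    rw [add_comm p, add_comm q]
    field_simp
    ring
  have h_nonneg : ∀ t ∈ Ioi (0 : ℝ), 0 ≤ 1 / ((p + t) * (q + t)) := fun t (ht : 0 < t) => by
    positivity
  have h_lim : Filter.Tendsto (fun t => (Real.log (t + p) - Real.log (t + q)) / (q - p))
      Filter.atTop (nhds 0) := by
    simpa using ((Real.tendsto_log_comp_add_sub_log p).sub
      (Real.tendsto_log_comp_add_sub_log q)).div_const (q - p)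
  rw [invLogMean, ← ofReal_integral_eq_lintegral_ofReal
    (integrableOn_Ioi_deriv_of_nonneg' h_deriv h_nonneg h_lim)
    ((ae_restrict_mem measurableSet_Ioi).mono h_nonneg),
    integral_Ioi_of_hasDerivAt_of_nonneg' h_deriv h_nonneg h_lim]
  congr 1
  simp only [zero_add]
  ring

theorem invLogMean_mul_mul_left {c : ℝ} (hc : 0 < c) (p q : ℝ) :
    invLogMean (c * p) (c * q) = ENNReal.ofReal (1 / c) * invLogMean p q := by
  rw [invLogMean, invLogMean, setLIntegral_Ioi_comp_mul_left hc,
    ← lintegral_const_mul' _ _ ENNReal.ofReal_ne_top,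
    ← lintegral_const_mul' _ _ ENNReal.ofReal_ne_top]
  congr 1 with t
  rw [← ENNReal.ofReal_mul hc.le, ← ENNReal.ofReal_mul (by positivity)]
  congr 1
  rw [show (c * p + c * t) * (c * q + c * t) = c * (c * ((p + t) * (q + t))) by ring]
  field_simp

theorem lintegral_one_div_affine_mul_affine (a c : ℝ) {b d : ℝ} (hb : 0 < b) (hd : 0 < d) :
    ∫⁻ t in Ioi 0, ENNReal.ofReal (1 / ((a + b * t) * (c + d * t))) =
      invLogMean (a * d) (b * c) := by
  rw [invLogMean, setLIntegral_Ioi_comp_mul_left (mul_pos hb hd) fun t =>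
      ENNReal.ofReal (1 / ((a * d + t) * (b * c + t))),
    ← lintegral_const_mul' _ _ ENNReal.ofReal_ne_top]
  congr 1 with t
  rw [← ENNReal.ofReal_mul (by positivity)]
  congr 1
  rw [show (a * d + b * d * t) * (b * c + b * d * t) = b * d * ((a + b * t) * (c + d * t)) by ring]
  field_simp

theorem lintegral_invLogMean_mul_mul {r s r' s' : ℝ} (hr : 0 < r) (hs : 0 < s) (hr' : 0 < r')
    (hs' : 0 < s') :
    ∫⁻ m in Ioi 0, invLogMean ((r + s * m) * (r' + s' * m)) ((1 + m) * (r * r' + s * s' * m)) =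
      invLogMean r s * invLogMean r' s' := by
  have h_expand : ∀ m ∈ Ioi (0 : ℝ),
      invLogMean ((r + s * m) * (r' + s' * m)) ((1 + m) * (r * r' + s * s' * m)) =
        ∫⁻ t in Ioi 0, ENNReal.ofReal (1 / (((1 + r * t) + (1 + s * t) * m) *
          (r' * (1 + r * t) + s' * (1 + s * t) * m))) := by
    intro m (hm : 0 < m)
    rw [invLogMean_comm, ← lintegral_one_div_affine_mul_affine _ _ (by positivity) (by positivity)]
    congr! 5 with t <;> ring
  have h_inner : ∀ t ∈ Ioi (0 : ℝ),
      ∫⁻ m in Ioi 0, ENNReal.ofReal (1 / (((1 + r * t) + (1 + s * t) * m) *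
          (r' * (1 + r * t) + s' * (1 + s * t) * m))) =
        ENNReal.ofReal (1 / ((1 + r * t) * (1 + s * t))) * invLogMean r' s' := by
    intro t (ht : 0 < t)
    rw [lintegral_one_div_affine_mul_affine _ _ (by positivity) (by positivity),
      invLogMean_comm r', ← invLogMean_mul_mul_left (by positivity)]
    congr 1 <;> ring
  rw [setLIntegral_congr_fun measurableSet_Ioi h_expand, lintegral_lintegral_swap (by fun_prop),
    setLIntegral_congr_fun measurableSet_Ioi h_inner, lintegral_mul_const _ (by fun_prop),
    lintegral_one_div_affine_mul_affine _ _ hr hs, invLogMean_comm r, one_mul, mul_one]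

/-! ### Gaussian integrals attached to `K₄` -/

section Gaussian

variable {V : Type*} [NormedAddCommGroup V]

theorem convexCombination_norm_sub_sq_pos {w : ℝ} (hw : w ∈ Ioo 0 1) {x y : V} (hxy : x ≠ y)
    (v : V) : 0 < w * ‖x - v‖ ^ 2 + (1 - w) * ‖y - v‖ ^ 2 := by
  have hw' := sub_pos.2 hw.2
  have hw₀ := hw.1
  rcases eq_or_ne x v with rfl | hx
  · have : 0 < ‖y - x‖ := norm_pos_iff.2 (sub_ne_zero.2 hxy.symm)
    positivity
  · have : 0 < ‖x - v‖ := norm_pos_iff.2 (sub_ne_zero.2 hx)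
    positivity

/-- The quadratic form in the positions `z = (x, y)` attached to the graph `K₄` on the vertices
`0, e, x, y` without its edge `0e`; the edges `0x, ex, 0y, ey, xy` have weights `a, b, c, d, f`. -/
def k4Form (a b c d f : ℝ) (e : V) (z : V × V) : ℝ :=
  a * ‖z.1‖ ^ 2 + b * ‖z.1 - e‖ ^ 2 + c * ‖z.2‖ ^ 2 + d * ‖z.2 - e‖ ^ 2 + f * ‖z.1 - z.2‖ ^ 2

/-- The position-space Symanzik polynomial of `K₄` without the edge `0e`, weighted as in `k4Form`,
that sums the weights of the spanning forests with two trees separating `0` from `e`. -/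
def k4ForestPoly (a b c d f : ℝ) : ℝ := (a + b) * (c + d) + f * (a + b + c + d)

/-- The position-space Symanzik polynomial of `K₄` without the edge `0e`, weighted as in `k4Form`,
that sums the weights of the spanning trees. -/
def k4TreePoly (a b c d f : ℝ) : ℝ := a * b * (c + d) + c * d * (a + b) + f * (a + c) * (b + d)

theorem mul_k4Form (t a b c d f : ℝ) (e : V) (z : V × V) :
    t * k4Form a b c d f e z = k4Form (t * a) (t * b) (t * c) (t * d) (t * f) e z := by
  simp only [k4Form]
  ring

theorem k4ForestPoly_mul_left (t a b c d f : ℝ) :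
    k4ForestPoly (t * a) (t * b) (t * c) (t * d) (t * f) = t ^ 2 * k4ForestPoly a b c d f := by
  simp only [k4ForestPoly]
  ring

theorem k4TreePoly_mul_left (t a b c d f : ℝ) :
    k4TreePoly (t * a) (t * b) (t * c) (t * d) (t * f) = t ^ 3 * k4TreePoly a b c d f := by
  simp only [k4TreePoly]
  ring

variable [InnerProductSpace ℝ V]

theorem mul_norm_sub_sq_add_mul_norm_sub_sq {α β : ℝ} (h : α + β ≠ 0) (x u v : V) :
    α * ‖x - u‖ ^ 2 + β * ‖x - v‖ ^ 2 =
      (α + β) * ‖x - (α + β)⁻¹ • (α • u + β • v)‖ ^ 2 + α * β / (α + β) * ‖u - v‖ ^ 2 := by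
  simp only [norm_sub_sq_real, norm_add_sq_real, norm_smul, mul_pow, inner_smul_left,
    inner_smul_right, inner_add_right, Real.norm_eq_abs, sq_abs, conj_trivial]
  field_simp
  ring

theorem k4Form_eq_add {a b c d : ℝ} (hab : a + b ≠ 0) (hcd : c + d ≠ 0) (f : ℝ) (e : V)
    (z : V × V) :
    k4Form a b c d f e z =
      (c + d) * ‖z.2 - (d / (c + d)) • e‖ ^ 2 + f * ‖z.2 - z.1‖ ^ 2 +
        ((a + b) * ‖z.1 - (b / (a + b)) • e‖ ^ 2 +
          (a * b / (a + b) + c * d / (c + d)) * ‖e‖ ^ 2) := by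
  have hx := mul_norm_sub_sq_add_mul_norm_sub_sq hab z.1 0 e
  have hy := mul_norm_sub_sq_add_mul_norm_sub_sq hcd z.2 0 e
  simp only [smul_zero, zero_add, sub_zero, zero_sub, norm_neg, smul_smul, inv_mul_eq_div] at hx hy
  rw [k4Form, norm_sub_rev z.1 z.2]
  linear_combination hx + hy

variable [FiniteDimensional ℝ V] [MeasurableSpace V] [BorelSpace V]

theorem lintegral_exp_neg_mul_norm_sub_sq {b : ℝ} (hb : 0 < b) (u : V) :
    ∫⁻ x, ENNReal.ofReal (Real.exp (-(b * ‖x - u‖ ^ 2))) =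
      ENNReal.ofReal ((Real.pi / b) ^ (Module.finrank ℝ V / 2 : ℝ)) := by
  have h_integral := GaussianFourier.integral_rexp_neg_mul_sq_norm (V := V) hb
  rw [lintegral_sub_right_eq_self fun x => ENNReal.ofReal (Real.exp (-(b * ‖x‖ ^ 2))),
    ← h_integral, ofReal_integral_eq_lintegral_ofReal]
  · simp only [neg_mul]
  · exact .of_integral_ne_zero (h_integral ▸ by positivity)
  · exact .of_forall fun x => by positivity

theorem lintegral_exp_neg_add_mul_norm_sub_sq {α β : ℝ} (h : 0 < α + β) (u v : V) :
    ∫⁻ x, ENNReal.ofReal (Real.exp (-(α * ‖x - u‖ ^ 2 + β * ‖x - v‖ ^ 2))) =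
      ENNReal.ofReal ((Real.pi / (α + β)) ^ (Module.finrank ℝ V / 2 : ℝ)) *
        ENNReal.ofReal (Real.exp (-(α * β / (α + β) * ‖u - v‖ ^ 2))) := by
  simp only [mul_norm_sub_sq_add_mul_norm_sub_sq h.ne', neg_add, Real.exp_add,
    ENNReal.ofReal_mul (Real.exp_pos _).le]
  rw [lintegral_mul_const' _ _ ENNReal.ofReal_ne_top, lintegral_exp_neg_mul_norm_sub_sq h]

theorem lintegral_exp_neg_k4Form {a b c d f : ℝ} (hab : 0 < a + b) (hcd : 0 < c + d) (hf : 0 ≤ f)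
    (e : V) :
    ∫⁻ z : V × V, ENNReal.ofReal (Real.exp (-k4Form a b c d f e z)) =
      ENNReal.ofReal ((Real.pi ^ 2 / k4ForestPoly a b c d f) ^ (Module.finrank ℝ V / 2 : ℝ)) *
        ENNReal.ofReal
          (Real.exp (-(k4TreePoly a b c d f / k4ForestPoly a b c d f * ‖e‖ ^ 2))) := by
  have hqf : 0 < c + d + f := by positivity
  have h_forest : (c + d + f) * (a + b + (c + d) * f / (c + d + f)) = k4ForestPoly a b c d f := by
    rw [k4ForestPoly]
    field_simp
    ring
  have h_tree : (a + b) * ((c + d) * f / (c + d + f)) / (a + b + (c + d) * f / (c + d + f)) *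
      ‖(b / (a + b)) • e - (d / (c + d)) • e‖ ^ 2 +
        (a * b / (a + b) + c * d / (c + d)) * ‖e‖ ^ 2 =
      k4TreePoly a b c d f / k4ForestPoly a b c d f * ‖e‖ ^ 2 := by
    rw [← h_forest, k4TreePoly, ← sub_smul, norm_smul, mul_pow, Real.norm_eq_abs, sq_abs]
    field_simp
    ring
  have h_y : ∀ x, ∫⁻ y, ENNReal.ofReal (Real.exp (-k4Form a b c d f e (x, y))) =
      ENNReal.ofReal ((Real.pi / (c + d + f)) ^ (Module.finrank ℝ V / 2 : ℝ)) *
        ENNReal.ofReal (Real.exp (-((a + b) * ‖x - (b / (a + b)) • e‖ ^ 2 +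
          (c + d) * f / (c + d + f) * ‖x - (d / (c + d)) • e‖ ^ 2))) *
        ENNReal.ofReal (Real.exp (-((a * b / (a + b) + c * d / (c + d)) * ‖e‖ ^ 2))) := by
    intro x
    simp only [k4Form_eq_add hab.ne' hcd.ne', neg_add _ (_ + _), Real.exp_add,
      ENNReal.ofReal_mul (Real.exp_pos _).le]
    rw [lintegral_mul_const' _ _ ENNReal.ofReal_ne_top,
      lintegral_exp_neg_add_mul_norm_sub_sq hqf, mul_assoc, mul_assoc,
      ← ENNReal.ofReal_mul (Real.exp_pos _).le, ← ENNReal.ofReal_mul (Real.exp_pos _).le,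
      ← Real.exp_add, ← Real.exp_add, norm_sub_rev]
    ring_nf
  rw [Measure.volume_eq_prod, lintegral_prod _ (by unfold k4Form; fun_prop)]
  simp only [h_y]
  rw [lintegral_mul_const' _ _ ENNReal.ofReal_ne_top,
    lintegral_const_mul' _ _ ENNReal.ofReal_ne_top,
    lintegral_exp_neg_add_mul_norm_sub_sq (by positivity), mul_assoc, mul_assoc,
    ← ENNReal.ofReal_mul (Real.exp_pos _).le, ← Real.exp_add, ← neg_add, h_tree, ← mul_assoc,
    ← ENNReal.ofReal_mul (by positivity), ← Real.mul_rpow (by positivity) (by positivity),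
    div_mul_div_comm, h_forest, ← sq]

theorem lintegral_lintegral_pow_four_mul_exp_neg_k4Form (hV : Module.finrank ℝ V = 4) {e : V}
    (he : e ≠ 0) {a b c d f : ℝ} (ha : 0 < a) (hb : 0 < b) (hc : 0 < c) (hd : 0 < d) (hf : 0 < f) :
    ∫⁻ z : V × V, ∫⁻ t in Ioi 0, ENNReal.ofReal (t ^ 4 * Real.exp (-(t * k4Form a b c d f e z))) =
      ENNReal.ofReal (Real.pi ^ 4 / (k4ForestPoly a b c d f * k4TreePoly a b c d f * ‖e‖ ^ 2)) := by
  have hU : 0 < k4ForestPoly a b c d f := by unfold k4ForestPoly; positivity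
  have hF : 0 < k4TreePoly a b c d f := by unfold k4TreePoly; positivity
  have : 0 < ‖e‖ := norm_pos_iff.2 he
  have h_z : ∀ t ∈ Ioi (0 : ℝ),
      ∫⁻ z : V × V, ENNReal.ofReal (t ^ 4 * Real.exp (-(t * k4Form a b c d f e z))) =
        ENNReal.ofReal (Real.pi ^ 4 / k4ForestPoly a b c d f ^ 2) *
          ENNReal.ofReal (t ^ 0 * Real.exp
            (-(k4TreePoly a b c d f / k4ForestPoly a b c d f * ‖e‖ ^ 2 * t))) := by
    intro t (ht : 0 < t)
    simp only [mul_k4Form, ENNReal.ofReal_mul (pow_nonneg ht.le 4)]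
    rw [lintegral_const_mul' _ _ ENNReal.ofReal_ne_top,
      lintegral_exp_neg_k4Form (by positivity) (by positivity) (by positivity),
      k4ForestPoly_mul_left, k4TreePoly_mul_left, hV,
      ← ENNReal.ofReal_mul (by positivity), ← ENNReal.ofReal_mul (by positivity),
      ← ENNReal.ofReal_mul (by positivity)]
    norm_num
    congr 1
    field_simp
  rw [lintegral_lintegral_swap (by unfold k4Form; fun_prop),
    setLIntegral_congr_fun measurableSet_Ioi h_z, lintegral_const_mul' _ _ ENNReal.ofReal_ne_top,
    lintegral_pow_mul_exp_neg_mul 0 (by positivity), ← ENNReal.ofReal_mul (by positivity)]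
  congr 1
  norm_num
  field_simp

theorem lintegral_lintegral_lintegral_k4Form (hV : Module.finrank ℝ V = 4) {e : V} (he : e ≠ 0)
    {r s m : ℝ} (hr : r ∈ Ioo 0 1) (hs : s ∈ Ioo 0 1) (hm : 0 < m) :
    ∫⁻ l in Ioi 0, ∫⁻ z : V × V, ∫⁻ t in Ioi 0, ENNReal.ofReal (m * (t ^ 4 *
        Real.exp (-(t * k4Form r (m * s) (1 - r) (m * (1 - s)) l e z)))) =
      ENNReal.ofReal (Real.pi ^ 4 / ‖e‖ ^ 2) *
        invLogMean ((r + s * m) * ((1 - r) + (1 - s) * m))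
          ((1 + m) * (r * (1 - r) + s * (1 - s) * m)) := by
  have hr' := sub_pos.2 hr.2
  have hs' := sub_pos.2 hs.2
  have h_forest : ∀ l, k4ForestPoly r (m * s) (1 - r) (m * (1 - s)) l =
      (r + s * m) * ((1 - r) + (1 - s) * m) + (1 + m) * l := fun l => by
    rw [k4ForestPoly]
    ring
  have h_tree : ∀ l, k4TreePoly r (m * s) (1 - r) (m * (1 - s)) l =
      m * ((r * (1 - r) + s * (1 - s) * m) + 1 * l) := fun l => by
    rw [k4TreePoly]
    ring
  have h_z : ∀ l ∈ Ioi (0 : ℝ), ∫⁻ z : V × V, ∫⁻ t in Ioi 0, ENNReal.ofReal (m * (t ^ 4 *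
        Real.exp (-(t * k4Form r (m * s) (1 - r) (m * (1 - s)) l e z)))) =
      ENNReal.ofReal (Real.pi ^ 4 / ‖e‖ ^ 2) * ENNReal.ofReal (1 /
        (((r + s * m) * ((1 - r) + (1 - s) * m) + (1 + m) * l) *
          ((r * (1 - r) + s * (1 - s) * m) + 1 * l))) := by
    intro l (hl : 0 < l)
    simp only [ENNReal.ofReal_mul hm.le, lintegral_const_mul' _ _ ENNReal.ofReal_ne_top]
    rw [lintegral_lintegral_pow_four_mul_exp_neg_k4Form hV he hr.1 (mul_pos hm hs.1) hr'
      (mul_pos hm hs') hl, h_forest, h_tree, ← ENNReal.ofReal_mul hm.le,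
      ← ENNReal.ofReal_mul (by positivity)]
    congr 1
    field_simp
  rw [setLIntegral_congr_fun measurableSet_Ioi h_z,
    lintegral_const_mul' _ _ ENNReal.ofReal_ne_top,
    lintegral_one_div_affine_mul_affine _ _ (by positivity) one_pos, mul_one]

theorem lintegral_one_div_sq_mul_sq_mul_norm_sub_sq (hV : Module.finrank ℝ V = 4) {e : V}
    (he : e ≠ 0) {r s : ℝ} (hr : r ∈ Ioo 0 1) (hs : s ∈ Ioo 0 1) :
    ∫⁻ z : V × V, ENNReal.ofReal (1 / ((r * ‖z.1‖ ^ 2 + (1 - r) * ‖z.2‖ ^ 2) ^ 2 *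
        (s * ‖z.1 - e‖ ^ 2 + (1 - s) * ‖z.2 - e‖ ^ 2) ^ 2 * ‖z.1 - z.2‖ ^ 2)) =
      ENNReal.ofReal (Real.pi ^ 4 / ‖e‖ ^ 2) * (invLogMean r s * invLogMean (1 - r) (1 - s)) := by
  have : Nontrivial V := ⟨e, 0, he⟩
  have h_schwinger : ∀ᵐ z : V × V,
      ENNReal.ofReal (1 / ((r * ‖z.1‖ ^ 2 + (1 - r) * ‖z.2‖ ^ 2) ^ 2 *
        (s * ‖z.1 - e‖ ^ 2 + (1 - s) * ‖z.2 - e‖ ^ 2) ^ 2 * ‖z.1 - z.2‖ ^ 2)) =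
      ∫⁻ m in Ioi 0, ∫⁻ l in Ioi 0, ∫⁻ t in Ioi 0, ENNReal.ofReal (m * (t ^ 4 *
        Real.exp (-(t * k4Form r (m * s) (1 - r) (m * (1 - s)) l e z)))) := by
    filter_upwards [ae_prod_fst_ne_snd volume volume] with z hz
    have hz' : 0 < ‖z.1 - z.2‖ := norm_pos_iff.2 (sub_ne_zero.2 hz)
    rw [← lintegral_schwinger (by simpa using convexCombination_norm_sub_sq_pos hr hz 0)
      (convexCombination_norm_sub_sq_pos hs hz e) (by positivity)]
    congr! 11
    rw [k4Form]
    ring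
  rw [lintegral_congr_ae h_schwinger,
    lintegral_lintegral_lintegral_rotate (by unfold k4Form; fun_prop),
    setLIntegral_congr_fun measurableSet_Ioi
      fun m hm => lintegral_lintegral_lintegral_k4Form hV he hr hs hm,
    lintegral_const_mul' _ _ ENNReal.ofReal_ne_top,
    lintegral_invLogMean_mul_mul hr.1 hs.1 (sub_pos.2 hr.2) (sub_pos.2 hs.2)]

theorem lintegral_k4_eq_lintegral_invLogMean (hV : Module.finrank ℝ V = 4) {e : V} (he : e ≠ 0) :
    ∫⁻ z : V × V, ENNReal.ofReal
        (1 / (‖z.1‖ ^ 2 * ‖z.1 - z.2‖ ^ 2 * ‖z.2‖ ^ 2 * ‖z.1 - e‖ ^ 2 * ‖z.2 - e‖ ^ 2)) =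
      ENNReal.ofReal (Real.pi ^ 4 / ‖e‖ ^ 2) *
        ∫⁻ r in Ioo 0 1, ∫⁻ s in Ioo 0 1, invLogMean r s * invLogMean (1 - r) (1 - s) := by
  have : Nontrivial V := ⟨e, 0, he⟩
  have h_sq_pos : ∀ {v : V}, v ≠ 0 → 0 < ‖v‖ ^ 2 := fun h => pow_pos (norm_pos_iff.2 h) 2
  have h_feynman : ∀ᵐ z : V × V, ENNReal.ofReal
        (1 / (‖z.1‖ ^ 2 * ‖z.1 - z.2‖ ^ 2 * ‖z.2‖ ^ 2 * ‖z.1 - e‖ ^ 2 * ‖z.2 - e‖ ^ 2)) =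
      ∫⁻ r in Ioo 0 1, ∫⁻ s in Ioo 0 1,
        ENNReal.ofReal (1 / ((r * ‖z.1‖ ^ 2 + (1 - r) * ‖z.2‖ ^ 2) ^ 2 *
          (s * ‖z.1 - e‖ ^ 2 + (1 - s) * ‖z.2 - e‖ ^ 2) ^ 2 * ‖z.1 - z.2‖ ^ 2)) := by
    filter_upwards [ae_prod_fst_ne_and_snd_ne volume volume (0 : V),
      ae_prod_fst_ne_and_snd_ne volume volume e] with z ⟨hx, hy⟩ ⟨hxe, hye⟩
    rw [lintegral_lintegral_one_div_convexCombination_sq (h_sq_pos hx) (h_sq_pos hy)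
      (h_sq_pos (sub_ne_zero.2 hxe)) (h_sq_pos (sub_ne_zero.2 hye))]
    congr 2
    ring
  have h_z : ∀ r ∈ Ioo (0 : ℝ) 1, ∫⁻ s in Ioo 0 1, ∫⁻ z : V × V,
        ENNReal.ofReal (1 / ((r * ‖z.1‖ ^ 2 + (1 - r) * ‖z.2‖ ^ 2) ^ 2 *
          (s * ‖z.1 - e‖ ^ 2 + (1 - s) * ‖z.2 - e‖ ^ 2) ^ 2 * ‖z.1 - z.2‖ ^ 2)) =
      ENNReal.ofReal (Real.pi ^ 4 / ‖e‖ ^ 2) *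
        ∫⁻ s in Ioo 0 1, invLogMean r s * invLogMean (1 - r) (1 - s) := fun r hr => by
    rw [setLIntegral_congr_fun measurableSet_Ioo
      fun s hs => lintegral_one_div_sq_mul_sq_mul_norm_sub_sq hV he hr hs,
      lintegral_const_mul' _ _ ENNReal.ofReal_ne_top]
  rw [lintegral_congr_ae h_feynman, lintegral_lintegral_lintegral_rotate (by fun_prop),
    setLIntegral_congr_fun measurableSet_Ioo h_z, lintegral_const_mul' _ _ ENNReal.ofReal_ne_top]

end Gaussian

/-! ### The Möbius substitution -/

/-- The Möbius transformation `y ↦ (1 - y) / (1 - x y)`, an involution of `(0, 1)` for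
`0 < x < 1`. -/
noncomputable def moebiusInvolution (x y : ℝ) : ℝ := (1 - y) / (1 - x * y)

theorem one_sub_mul_pos {x y : ℝ} (hx : x ∈ Ioo 0 1) (hy : y ∈ Ioo 0 1) : 0 < 1 - x * y :=
  sub_pos.2 (mul_lt_one_of_nonneg_of_lt_one_left hx.1.le hx.2 hy.2.le)

theorem one_sub_moebiusInvolution {x y : ℝ} (h : 1 - x * y ≠ 0) :
    1 - moebiusInvolution x y = (1 - x) / (1 - x * y) * y := by
  rw [moebiusInvolution, one_sub_div h]
  ring

theorem one_sub_mul_moebiusInvolution {x y : ℝ} (h : 1 - x * y ≠ 0) :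
    1 - x * moebiusInvolution x y = (1 - x) / (1 - x * y) := by
  rw [moebiusInvolution, ← mul_div_assoc, one_sub_div h]
  ring

theorem bijOn_moebiusInvolution {x : ℝ} (hx : x ∈ Ioo 0 1) :
    BijOn (moebiusInvolution x) (Ioo 0 1) (Ioo 0 1) := by
  have h_maps : MapsTo (moebiusInvolution x) (Ioo 0 1) (Ioo 0 1) := fun y hy => by
    have h_den := one_sub_mul_pos hx hy
    refine ⟨div_pos (sub_pos.2 hy.2) h_den, sub_pos.1 ?_⟩
    rw [one_sub_moebiusInvolution h_den.ne']
    exact mul_pos (div_pos (sub_pos.2 hx.2) h_den) hy.1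
  have h_inv : LeftInvOn (moebiusInvolution x) (moebiusInvolution x) (Ioo 0 1) := fun y hy => by
    have h_den := (one_sub_mul_pos hx hy).ne'
    have hx' := (sub_pos.2 hx.2).ne'
    rw [moebiusInvolution, one_sub_moebiusInvolution h_den, one_sub_mul_moebiusInvolution h_den,
      mul_div_cancel_left₀ _ (div_ne_zero hx' h_den)]
  exact InvOn.bijOn ⟨h_inv, h_inv⟩ h_maps h_maps

theorem lintegral_Ioo_comp_moebiusInvolution {x : ℝ} (hx : x ∈ Ioo 0 1) (g : ℝ → ℝ≥0∞) :
    ∫⁻ r in Ioo 0 1, g r = ∫⁻ y in Ioo 0 1,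
      ENNReal.ofReal ((1 - x) / (1 - x * y) ^ 2) * g (moebiusInvolution x y) := by
  have h_deriv : ∀ y ∈ Ioo (0 : ℝ) 1, HasDerivWithinAt (moebiusInvolution x)
      (-((1 - x) / (1 - x * y) ^ 2)) (Ioo 0 1) y := fun y hy => by
    refine (((hasDerivAt_id' y).const_sub 1).div ((hasDerivAt_const_mul x).const_sub 1)
      (one_sub_mul_pos hx hy).ne').hasDerivWithinAt.congr_deriv ?_
    ring
  conv_lhs => rw [← (bijOn_moebiusInvolution hx).image_eq]
  rw [lintegral_image_eq_lintegral_abs_deriv_mul measurableSet_Ioo h_deriv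
    (bijOn_moebiusInvolution hx).injOn]
  simp only [abs_neg, abs_of_nonneg (div_nonneg (sub_pos.2 hx.2).le (sq_nonneg _))]

theorem lintegral_invLogMean_one_sub {x : ℝ} (hx : x ∈ Ioo 0 1) :
    ∫⁻ r in Ioo 0 1, invLogMean (1 - r) (1 - x * r) =
      ∫⁻ y in Ioo 0 1, ENNReal.ofReal (1 / (1 - x * y)) * invLogMean y 1 := by
  rw [lintegral_Ioo_comp_moebiusInvolution hx]
  refine setLIntegral_congr_fun measurableSet_Ioo fun y hy => ?_
  have hx' : 0 < 1 - x := sub_pos.2 hx.2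
  have h_den := one_sub_mul_pos hx hy
  simp only [one_sub_moebiusInvolution h_den.ne', one_sub_mul_moebiusInvolution h_den.ne']
  rw [← mul_one ((1 - x) / (1 - x * y)), mul_assoc, one_mul,
    invLogMean_mul_mul_left (div_pos hx' h_den), ← mul_assoc, ← ENNReal.ofReal_mul (by positivity)]
  congr 2
  field_simp

theorem lintegral_invLogMean_mul_invLogMean :
    ∫⁻ r in Ioo 0 1, ∫⁻ s in Ioo 0 1, invLogMean r s * invLogMean (1 - r) (1 - s) =
      2 * ∫⁻ x in Ioo 0 1, ∫⁻ y in Ioo 0 1,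
        ENNReal.ofReal (1 / (1 - x * y)) * (invLogMean x 1 * invLogMean y 1) := by
  have h_scale : ∀ r ∈ Ioo (0 : ℝ) 1, ∀ x,
      ENNReal.ofReal r * (invLogMean r (x * r) * invLogMean (1 - r) (1 - x * r)) =
        invLogMean x 1 * invLogMean (1 - r) (1 - x * r) := fun r hr x => by
    have h := invLogMean_mul_mul_left hr.1 x 1
    rw [mul_one] at h
    rw [invLogMean_comm r, mul_comm x, h, ← mul_assoc, ← mul_assoc, ← ENNReal.ofReal_mul hr.1.le,
      mul_one_div_cancel hr.1.ne', ENNReal.ofReal_one, one_mul, mul_comm r]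
  rw [lintegral_Ioo_lintegral_Ioo_of_reflect (by fun_prop)
    fun r s => by rw [sub_sub_cancel, sub_sub_cancel, mul_comm],
    setLIntegral_congr_fun measurableSet_Ioo fun r hr => lintegral_congr (h_scale r hr),
    lintegral_lintegral_swap (by fun_prop)]
  congr 1
  refine setLIntegral_congr_fun measurableSet_Ioo fun x hx => ?_
  rw [lintegral_const_mul _ (by fun_prop), lintegral_invLogMean_one_sub hx,
    ← lintegral_const_mul _ (by fun_prop)]
  simp only [mul_left_comm]

/-! ### Euler's double sum -/

theorem tsum_ite_le (f : ℕ → ℝ≥0∞) (n : ℕ) :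
    ∑' m, (if n ≤ m then f m else 0) = ∑' i, f (n + i) := by
  have h_support : (Function.support fun m => if n ≤ m then f m else 0) ⊆ range (n + ·) :=
    Function.support_subset_iff'.2 fun m hm =>
      if_neg fun h => hm ⟨m - n, Nat.add_sub_cancel' h⟩
  rw [← (add_right_injective n).tsum_eq h_support]
  simp only [le_add_iff_nonneg_right, zero_le, if_true]

theorem tsum_tsum_add (f : ℕ → ℝ≥0∞) :
    ∑' (n : ℕ) (i : ℕ), f (n + i) = ∑' m : ℕ, (m + 1) * f m := by
  have h_column : ∀ m, ∑' n, (if n ≤ m then f m else 0) = (m + 1) * f m := fun m => by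
    have h_support : ∀ n ∉ Finset.range (m + 1), (if n ≤ m then f m else 0) = 0 := fun n hn =>
      if_neg fun h => hn (Finset.mem_range_succ_iff.2 h)
    rw [tsum_eq_sum h_support, Finset.sum_congr rfl
      fun n hn => if_pos (Finset.mem_range_succ_iff.1 hn)]
    simp
  calc ∑' (n : ℕ) (i : ℕ), f (n + i) = ∑' (n : ℕ) (m : ℕ), if n ≤ m then f m else 0 :=
        tsum_congr fun n => (tsum_ite_le f n).symm
    _ = ∑' (m : ℕ) (n : ℕ), if n ≤ m then f m else 0 := ENNReal.tsum_comm
    _ = ∑' m : ℕ, (m + 1) * f m := tsum_congr h_column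

theorem sq_tsum_eq_tsum (f : ℕ → ℝ≥0∞) :
    (∑' i, f i) ^ 2 = ∑' i, (f i ^ 2 + 2 * ∑' j, f i * f (i + 1 + j)) := by
  let u : ℕ → ℕ → ℝ≥0∞ := fun i j => if i + 1 ≤ j then f i * f j else 0
  have h_split : ∀ i j, f i * f j = (if j = i then f i ^ 2 else 0) + (u i j + u j i) := by
    intro i j
    rcases lt_trichotomy i j with h | rfl | h
    · simp [u, h, h.ne', h.le.not_gt]
    · simp [u, sq]
    · simp [u, h, h.ne, h.le.not_gt, mul_comm]
  calc (∑' i, f i) ^ 2 = ∑' (i : ℕ) (j : ℕ), f i * f j := by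
        simp only [sq, ENNReal.tsum_mul_left, ENNReal.tsum_mul_right]
    _ = (∑' i, f i ^ 2) + (∑' (i : ℕ) (j : ℕ), u i j + ∑' (i : ℕ) (j : ℕ), u j i) := by
        rw [tsum_congr fun i => tsum_congr (h_split i)]
        simp only [ENNReal.tsum_add, tsum_ite_eq]
    _ = ∑' i, (f i ^ 2 + 2 * ∑' j, u i j) := by
        rw [ENNReal.tsum_comm (f := fun i j => u j i), ← two_mul, ENNReal.tsum_add,
          ENNReal.tsum_mul_left]
    _ = ∑' i, (f i ^ 2 + 2 * ∑' j, f i * f (i + 1 + j)) := by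
        simp only [u, tsum_ite_le fun j => f _ * f j]

theorem ofReal_inv_one_sub_eq_tsum {x : ℝ} (h₀ : 0 ≤ x) (h₁ : x < 1) :
    ENNReal.ofReal (1 - x)⁻¹ = ∑' n : ℕ, ENNReal.ofReal (x ^ n) := by
  rw [← tsum_geometric_of_lt_one h₀ h₁, ENNReal.ofReal_tsum_of_nonneg (fun n => pow_nonneg h₀ n)
    (summable_geometric_of_lt_one h₀ h₁)]

theorem lintegral_neg_log_sq_div_one_sub :
    ∫⁻ x in Ioo 0 1, ENNReal.ofReal ((-Real.log x) ^ 2 / (1 - x)) =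
      2 * ∑' n : ℕ, ENNReal.ofReal (1 / ((n : ℝ) + 1) ^ 3) := by
  have h_series : ∀ x ∈ Ioo (0 : ℝ) 1, ENNReal.ofReal ((-Real.log x) ^ 2 / (1 - x)) =
      ∑' n : ℕ, ENNReal.ofReal (x ^ n * (-Real.log x) ^ 2) := fun x hx => by
    rw [div_eq_inv_mul, ENNReal.ofReal_mul (inv_nonneg.2 (sub_pos.2 hx.2).le),
      ofReal_inv_one_sub_eq_tsum hx.1.le hx.2, ← ENNReal.tsum_mul_right]
    simp only [ENNReal.ofReal_mul (pow_nonneg hx.1.le _)]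
  rw [setLIntegral_congr_fun measurableSet_Ioo h_series, lintegral_tsum fun n => by fun_prop,
    ← ENNReal.tsum_mul_left]
  refine tsum_congr fun n => ?_
  rw [lintegral_pow_mul_neg_log_pow, ← ENNReal.ofReal_ofNat 2, ← ENNReal.ofReal_mul zero_le_two]
  norm_num [div_eq_mul_inv]

theorem lintegral_neg_log_one_sub_sq_div :
    ∫⁻ x in Ioo 0 1, ENNReal.ofReal ((-Real.log (1 - x)) ^ 2 / x) =
      ∑' (i : ℕ) (j : ℕ), ENNReal.ofReal (1 / (((i : ℝ) + 1) * (j + 1) * (i + j + 2))) := by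
  have h_log : ∀ x ∈ Ioo (0 : ℝ) 1, ENNReal.ofReal (-Real.log (1 - x)) =
      ∑' i : ℕ, ENNReal.ofReal (x ^ (i + 1) / (i + 1)) := fun x hx => by
    have h := Real.hasSum_pow_div_log_of_abs_lt_one (abs_lt.2 ⟨by linarith [hx.1], hx.2⟩)
    rw [← h.tsum_eq, ENNReal.ofReal_tsum_of_nonneg _ h.summable]
    exact fun i => by have := hx.1; positivity
  have h_series : ∀ x ∈ Ioo (0 : ℝ) 1, ENNReal.ofReal ((-Real.log (1 - x)) ^ 2 / x) =
      ∑' (i : ℕ) (j : ℕ), ENNReal.ofReal (1 / (((i : ℝ) + 1) * (j + 1))) *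
        ENNReal.ofReal (x ^ (i + j + 1) * (-Real.log x) ^ 0) := fun x hx => by
    have hx₀ := hx.1
    have h_log_nonneg : 0 ≤ -Real.log (1 - x) :=
      (neg_pos.2 (Real.log_neg (sub_pos.2 hx.2) (sub_lt_self 1 hx₀))).le
    rw [div_eq_inv_mul, sq, ENNReal.ofReal_mul (inv_nonneg.2 hx₀.le),
      ENNReal.ofReal_mul h_log_nonneg, h_log x hx, ← ENNReal.tsum_mul_right,
      ← ENNReal.tsum_mul_left]
    refine tsum_congr fun i => ?_
    rw [← ENNReal.tsum_mul_left, ← ENNReal.tsum_mul_left]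
    refine tsum_congr fun j => ?_
    rw [← ENNReal.ofReal_mul (by positivity), ← ENNReal.ofReal_mul (by positivity),
      ← ENNReal.ofReal_mul (by positivity)]
    congr 1
    field_simp
    ring
  rw [setLIntegral_congr_fun measurableSet_Ioo h_series, lintegral_tsum fun i => by fun_prop]
  refine tsum_congr fun i => ?_
  rw [lintegral_tsum fun j => by fun_prop]
  refine tsum_congr fun j => ?_
  rw [lintegral_const_mul' _ _ ENNReal.ofReal_ne_top, lintegral_pow_mul_neg_log_pow,
    ← ENNReal.ofReal_mul (by positivity)]
  congr 1
  push_cast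
  field_simp
  norm_num [add_assoc]

theorem tsum_tsum_one_div_mul_sq :
    ∑' (i : ℕ) (j : ℕ), ENNReal.ofReal (1 / (((i : ℝ) + 1) * (i + j + 2) ^ 2)) =
      ∑' n : ℕ, ENNReal.ofReal (1 / ((n : ℝ) + 1) ^ 3) := by
  let g : ℕ → ℕ → ℝ≥0∞ := fun i j => ENNReal.ofReal (1 / (((i : ℝ) + 1) * (i + j + 2) ^ 2))
  have h_partial : ∀ i j : ℕ,
      ENNReal.ofReal (1 / (((i : ℝ) + 1) * (j + 1) * (i + j + 2))) = g i j + g j i := fun i j => by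
    rw [← ENNReal.ofReal_add (by positivity) (by positivity), add_comm (j : ℝ) i]
    congr 1
    field_simp
    ring
  have h_reflect := setLIntegral_Ioo_comp_sub_left 0 1 1 fun x : ℝ =>
    ENNReal.ofReal ((-Real.log x) ^ 2 / (1 - x))
  simp only [sub_self, sub_zero, sub_sub_cancel] at h_reflect
  refine (ENNReal.mul_right_inj two_ne_zero ENNReal.ofNat_ne_top).1 ?_
  rw [← lintegral_neg_log_sq_div_one_sub, ← h_reflect, lintegral_neg_log_one_sub_sq_div]
  simp only [h_partial, ENNReal.tsum_add]
  rw [ENNReal.tsum_comm (f := fun i j => g j i), two_mul]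

theorem tsum_sq_tsum_one_div_sq :
    ∑' n : ℕ, (∑' i : ℕ, ENNReal.ofReal (1 / (((n + i : ℕ) : ℝ) + 1) ^ 2)) ^ 2 =
      3 * ∑' n : ℕ, ENNReal.ofReal (1 / ((n : ℝ) + 1) ^ 3) := by
  let w : ℕ → ℝ≥0∞ := fun m => ENNReal.ofReal (1 / ((m : ℝ) + 1) ^ 2)
  have h_succ : ∀ m : ℕ, (m + 1 : ℝ≥0∞) = ENNReal.ofReal (m + 1) := fun m => by
    rw [ENNReal.ofReal_add m.cast_nonneg zero_le_one, ENNReal.ofReal_natCast, ENNReal.ofReal_one]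
  have h_diag : ∀ m : ℕ, (m + 1) * w m ^ 2 = ENNReal.ofReal (1 / ((m : ℝ) + 1) ^ 3) := fun m => by
    rw [h_succ, sq, ← ENNReal.ofReal_mul (by positivity), ← ENNReal.ofReal_mul (by positivity)]
    congr 1
    field_simp
  have h_off : ∀ m j : ℕ, (m + 1) * (w m * w (m + 1 + j)) =
      ENNReal.ofReal (1 / (((m : ℝ) + 1) * (m + j + 2) ^ 2)) := fun m j => by
    rw [h_succ, ← ENNReal.ofReal_mul (by positivity), ← ENNReal.ofReal_mul (by positivity)]
    congr 1
    push_cast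
    field_simp
    ring
  calc ∑' n : ℕ, (∑' i : ℕ, w (n + i)) ^ 2
      = ∑' m : ℕ, (m + 1) * (w m ^ 2 + 2 * ∑' j, w m * w (m + 1 + j)) := by
        rw [← tsum_tsum_add fun m => w m ^ 2 + 2 * ∑' j, w m * w (m + 1 + j)]
        refine tsum_congr fun n => ?_
        simp only [sq_tsum_eq_tsum fun i => w (n + i), add_assoc]
    _ = ∑' m : ℕ, ENNReal.ofReal (1 / ((m : ℝ) + 1) ^ 3) + 2 *
          ∑' (m : ℕ) (j : ℕ), ENNReal.ofReal (1 / (((m : ℝ) + 1) * (m + j + 2) ^ 2)) := by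
        simp only [mul_add, h_diag, mul_left_comm _ (2 : ℝ≥0∞), ← ENNReal.tsum_mul_left, h_off,
          ENNReal.tsum_add]
    _ = 3 * ∑' n : ℕ, ENNReal.ofReal (1 / ((n : ℝ) + 1) ^ 3) := by
        rw [tsum_tsum_one_div_mul_sq]
        ring

/-! ### The period -/

theorem invLogMean_one_eq_tsum {x : ℝ} (hx : x ∈ Ioo 0 1) :
    invLogMean x 1 = ∑' i : ℕ, ENNReal.ofReal (x ^ i * -Real.log x) := by
  rw [invLogMean_eq_log_sub_log_div hx.1 one_pos hx.2.ne, Real.log_one, zero_sub, div_eq_inv_mul,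
    ENNReal.ofReal_mul (inv_nonneg.2 (sub_pos.2 hx.2).le), ofReal_inv_one_sub_eq_tsum hx.1.le hx.2,
    ← ENNReal.tsum_mul_right]
  simp only [ENNReal.ofReal_mul (pow_nonneg hx.1.le _)]

theorem lintegral_pow_mul_invLogMean_one (n : ℕ) :
    ∫⁻ x in Ioo 0 1, ENNReal.ofReal (x ^ n) * invLogMean x 1 =
      ∑' i : ℕ, ENNReal.ofReal (1 / (((n + i : ℕ) : ℝ) + 1) ^ 2) := by
  have h_series : ∀ x ∈ Ioo (0 : ℝ) 1, ENNReal.ofReal (x ^ n) * invLogMean x 1 =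
      ∑' i : ℕ, ENNReal.ofReal (x ^ (n + i) * (-Real.log x) ^ 1) := fun x hx => by
    rw [invLogMean_one_eq_tsum hx, ← ENNReal.tsum_mul_left]
    simp only [← ENNReal.ofReal_mul (pow_nonneg hx.1.le n), ← mul_assoc, pow_add, pow_one]
  rw [setLIntegral_congr_fun measurableSet_Ioo h_series, lintegral_tsum fun i => by fun_prop]
  simp only [lintegral_pow_mul_neg_log_pow, Nat.factorial_one, Nat.cast_one, one_add_one_eq_two]

theorem lintegral_one_div_one_sub_mul_mul {f : ℝ → ℝ≥0∞} (hf : Measurable f) :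
    ∫⁻ x in Ioo 0 1, ∫⁻ y in Ioo 0 1, ENNReal.ofReal (1 / (1 - x * y)) * (f x * f y) =
      ∑' n : ℕ, (∫⁻ x in Ioo 0 1, ENNReal.ofReal (x ^ n) * f x) ^ 2 := by
  have h_series : ∀ x ∈ Ioo (0 : ℝ) 1, ∀ y ∈ Ioo (0 : ℝ) 1,
      ENNReal.ofReal (1 / (1 - x * y)) * (f x * f y) =
        ∑' n : ℕ, ENNReal.ofReal (x ^ n) * f x * (ENNReal.ofReal (y ^ n) * f y) := by
    intro x hx y hy
    rw [one_div, ofReal_inv_one_sub_eq_tsum (mul_pos hx.1 hy.1).le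
      (sub_pos.1 (one_sub_mul_pos hx hy)), ← ENNReal.tsum_mul_right]
    simp only [mul_pow, ENNReal.ofReal_mul (pow_nonneg hx.1.le _), mul_mul_mul_comm]
  have h_y : ∀ x ∈ Ioo (0 : ℝ) 1,
      ∫⁻ y in Ioo 0 1, ENNReal.ofReal (1 / (1 - x * y)) * (f x * f y) =
        ∑' n : ℕ, ENNReal.ofReal (x ^ n) * f x * ∫⁻ y in Ioo 0 1, ENNReal.ofReal (y ^ n) * f y := by
    intro x hx
    rw [setLIntegral_congr_fun measurableSet_Ioo (h_series x hx),
      lintegral_tsum fun n => by fun_prop]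
    exact tsum_congr fun n => lintegral_const_mul _ (by fun_prop)
  rw [setLIntegral_congr_fun measurableSet_Ioo h_y, lintegral_tsum fun n => by fun_prop]
  exact tsum_congr fun n => by rw [lintegral_mul_const _ (by fun_prop), sq]

theorem lintegral_invLogMean_eq_tsum :
    ∫⁻ r in Ioo 0 1, ∫⁻ s in Ioo 0 1, invLogMean r s * invLogMean (1 - r) (1 - s) =
      6 * ∑' n : ℕ, ENNReal.ofReal (1 / ((n : ℝ) + 1) ^ 3) := by
  rw [lintegral_invLogMean_mul_invLogMean,
    lintegral_one_div_one_sub_mul_mul (f := fun x => invLogMean x 1) (by fun_prop)]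
  simp only [lintegral_pow_mul_invLogMean_one, tsum_sq_tsum_one_div_sq]
  ring

theorem summable_one_div_natCast_add_one_pow {k : ℕ} (hk : 1 < k) :
    Summable fun n : ℕ => 1 / ((n : ℝ) + 1) ^ k := by
  exact_mod_cast (summable_nat_add_iff 1).2 (Real.summable_one_div_nat_pow.2 hk)

theorem riemannZeta_natCast_eq_ofReal_tsum {k : ℕ} (hk : 1 < k) :
    riemannZeta k = ((∑' n : ℕ, 1 / ((n : ℝ) + 1) ^ k : ℝ) : ℂ) := by
  rw [zeta_eq_tsum_one_div_nat_add_one_cpow (by exact_mod_cast hk)]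
  push_cast
  simp only [Complex.cpow_natCast]

section Period

variable {V : Type*} [NormedAddCommGroup V] [InnerProductSpace ℝ V] [FiniteDimensional ℝ V]
  [MeasurableSpace V] [BorelSpace V]

theorem lintegral_k4_eq_tsum (hV : Module.finrank ℝ V = 4) {e : V} (he : e ≠ 0) :
    ∫⁻ z : V × V, ENNReal.ofReal
        (1 / (‖z.1‖ ^ 2 * ‖z.1 - z.2‖ ^ 2 * ‖z.2‖ ^ 2 * ‖z.1 - e‖ ^ 2 * ‖z.2 - e‖ ^ 2)) =
      ENNReal.ofReal (Real.pi ^ 4 / ‖e‖ ^ 2 * (6 * ∑' n : ℕ, 1 / ((n : ℝ) + 1) ^ 3)) := by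
  rw [lintegral_k4_eq_lintegral_invLogMean hV he, lintegral_invLogMean_eq_tsum,
    ENNReal.ofReal_mul (by positivity), ENNReal.ofReal_mul (by positivity), ENNReal.ofReal_ofNat,
    ENNReal.ofReal_tsum_of_nonneg (fun n => by positivity)
      (summable_one_div_natCast_add_one_pow (by norm_num))]

theorem period_K4_eq_six_zeta_three_general (hV : Module.finrank ℝ V = 4) {e : V} (he : e ≠ 0) :
    Integrable (fun x : V × V =>
      1 / (‖x.1‖ ^ 2 * ‖x.1 - x.2‖ ^ 2 * ‖x.2‖ ^ 2 * ‖x.1 - e‖ ^ 2 * ‖x.2 - e‖ ^ 2)) ∧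
    (((1 / Real.pi ^ 4) * ∫ x : V × V,
        1 / (‖x.1‖ ^ 2 * ‖x.1 - x.2‖ ^ 2 * ‖x.2‖ ^ 2 * ‖x.1 - e‖ ^ 2 * ‖x.2 - e‖ ^ 2) : ℝ) : ℂ)
      = 6 * riemannZeta 3 / ‖e‖ ^ 2 := by
  have h_measurable : Measurable fun x : V × V =>
      1 / (‖x.1‖ ^ 2 * ‖x.1 - x.2‖ ^ 2 * ‖x.2‖ ^ 2 * ‖x.1 - e‖ ^ 2 * ‖x.2 - e‖ ^ 2) := by fun_prop
  have h_lintegral := lintegral_k4_eq_tsum hV he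
  have h_zeta : riemannZeta 3 = ((∑' n : ℕ, 1 / ((n : ℝ) + 1) ^ 3 : ℝ) : ℂ) :=
    mod_cast riemannZeta_natCast_eq_ofReal_tsum (k := 3) (by norm_num)
  have h_nonneg : 0 ≤ ∑' n : ℕ, 1 / ((n : ℝ) + 1) ^ 3 := tsum_nonneg fun n => by positivity
  constructor
  · rw [← lintegral_ofReal_ne_top_iff_integrable h_measurable.aestronglyMeasurable
      (.of_forall fun x => by positivity), h_lintegral]
    exact ENNReal.ofReal_ne_top
  · rw [integral_eq_lintegral_of_nonneg_ae (.of_forall fun x => by positivity)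
      h_measurable.aestronglyMeasurable, h_lintegral,
      ENNReal.toReal_ofReal (mul_nonneg (by positivity) (mul_nonneg (by positivity) h_nonneg)),
      h_zeta, ← Complex.ofReal_ofNat]
    norm_cast
    field_simp

end Period

end FeynmanPeriod

/-- The Feynman period `P₃` of the complete graph `K₄` (wheel with three
spokes) in four dimensions equals `6ζ(3)`. -/
theorem period_K4_eq_six_zeta_three
    (e : EuclideanSpace ℝ (Fin 4)) (he : ‖e‖ = 1) :
    Integrable (fun x : EuclideanSpace ℝ (Fin 4) × EuclideanSpace ℝ (Fin 4) =>
      1 / (‖x.1‖ ^ 2 * ‖x.1 - x.2‖ ^ 2 * ‖x.2‖ ^ 2 * ‖x.1 - e‖ ^ 2 * ‖x.2 - e‖ ^ 2)) ∧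
    (((1 / Real.pi ^ 4) * ∫ x : EuclideanSpace ℝ (Fin 4) × EuclideanSpace ℝ (Fin 4),
        1 / (‖x.1‖ ^ 2 * ‖x.1 - x.2‖ ^ 2 * ‖x.2‖ ^ 2 * ‖x.1 - e‖ ^ 2 * ‖x.2 - e‖ ^ 2) : ℝ) : ℂ)
      = 6 * riemannZeta 3 := by
  have h := period_K4_eq_six_zeta_three_general finrank_euclideanSpace_fin
    (norm_ne_zero_iff.1 (he ▸ one_ne_zero))
  rwa [he, Complex.ofReal_one, one_pow, div_one] at h
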